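/- A state operator T on a complex separable Hilbert space H is an extreme point of the convex set of all state operators (i.e., whenever T = w T₁ + (1−w) T₂ with state operators T₁, T₂ and 0 < w < 1, necessarily T = T₁ = T₂) if and only if there exists a unit vector ψ ∈ H such that T is the rank-one orthogonal projection |ψ⟩⟨ψ| onto the span of ψ. -/

import Mathlib

open scoped ComplexInnerProductSpace

/-- The trace of a (trace-class) operator computed along a Hilbert basis. -/
noncomputable def trAlong {H : Type*} [NormedAddCommGroup H] [InnerProductSpace ℂ H]
    {ι : Type*} (b : HilbertBasis ι ℂ H) (A : H →L[ℂ] H) : ℂ :=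
  ∑' i, ⟪b i, A (b i)⟫

/-- A state operator: a positive trace-class operator with trace one. -/
def IsStateOperator {H : Type*} [NormedAddCommGroup H] [InnerProductSpace ℂ H]
    [CompleteSpace H] {ι : Type*} (b : HilbertBasis ι ℂ H) (T : H →L[ℂ] H) : Prop :=
  T.IsPositive ∧ Summable (fun i => ⟪b i, T (b i)⟫) ∧ trAlong b T = 1

/-!
Call a positive operator `T` pure if every positive `S ≤ T` is a multiple of `T`.

* Scaling a positive operator of nonzero trace to trace one turns `0 ≤ S ≤ T` into a convex
  decomposition of `T`, and conversely; so the extreme states are exactly the pure ones.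
* By Cauchy–Schwarz for the form `⟪T ·, ·⟫`, a positive `T` with `T x ≠ 0` dominates the operator
  `⟪T x, x⟫⁻¹ |T x⟩⟨T x|`, which agrees with `T` at `x`; so a pure `T` equals it. Conversely
  a positive `S ≤ |η⟩⟨η|` vanishes on the orthogonal complement of `η`, hence is a multiple of
  `|η⟩⟨η|`.
-/

open InnerProductSpace
open scoped ComplexOrder

section Positive

variable {𝕜 E : Type*} [RCLike 𝕜] [NormedAddCommGroup E] [InnerProductSpace 𝕜 E]
  {S T : E →L[𝕜] E}

theorem norm_inner_apply_sq_le_of_isPositive (hT : T.IsPositive) (x y : E) :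
    ‖⟪T x, y⟫_𝕜‖ ^ 2 ≤ RCLike.re ⟪T x, x⟫_𝕜 * RCLike.re ⟪T y, y⟫_𝕜 := by
  let form : PreInnerProductSpace.Core 𝕜 E :=
    { inner := fun u v => ⟪T u, v⟫_𝕜
      conj_inner_symm := fun u v => by rw [inner_conj_symm, hT.inner_left_eq_inner_right]
      re_inner_nonneg := hT.re_inner_nonneg_left
      add_left := fun u v z => by rw [map_add, inner_add_left]
      smul_left := fun u v r => by rw [map_smul, inner_smul_left] }
  have cauchySchwarz : ‖⟪T x, y⟫_𝕜‖ * ‖⟪T y, x⟫_𝕜‖ ≤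
      RCLike.re ⟪T x, x⟫_𝕜 * RCLike.re ⟪T y, y⟫_𝕜 :=
    @InnerProductSpace.Core.inner_mul_inner_self_le 𝕜 E _ _ _ form x y
  rwa [hT.inner_left_eq_inner_right y x, norm_inner_symm y, ← sq] at cauchySchwarz

theorem apply_eq_zero_of_re_inner_apply_self_eq_zero (hT : T.IsPositive) {x : E}
    (hx : RCLike.re ⟪T x, x⟫_𝕜 = 0) : T x = 0 := by
  have h := norm_inner_apply_sq_le_of_isPositive hT x (T x)
  rw [hx, zero_mul] at h
  exact inner_self_eq_zero.1 (norm_eq_zero.1 (sq_nonpos_iff _ |>.1 h))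

theorem apply_eq_zero_of_isPositive_of_le (hS : S.IsPositive) (hST : S ≤ T) {x : E}
    (hx : T x = 0) : S x = 0 := by
  refine apply_eq_zero_of_re_inner_apply_self_eq_zero hS
    (le_antisymm ?_ (hS.re_inner_nonneg_left x))
  simpa [hx] using hST.re_inner_nonneg_left x

theorem rankOne_apply_self_le_smul (hT : T.IsPositive) (x : E) :
    rankOne 𝕜 (T x) (T x) ≤ (RCLike.re ⟪T x, x⟫_𝕜 : 𝕜) • T := by
  have hd : (0 : 𝕜) ≤ (RCLike.re ⟪T x, x⟫_𝕜 : 𝕜) :=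
    RCLike.ofReal_nonneg.2 (hT.re_inner_nonneg_left x)
  refine ⟨(hT.smul_of_nonneg hd).isSymmetric.sub (isSymmetric_rankOne_self (T x)), fun u => ?_⟩
  have h := norm_inner_apply_sq_le_of_isPositive hT x u
  have hrank : ⟪rankOne 𝕜 (T x) (T x) u, u⟫_𝕜 = ((‖⟪T x, u⟫_𝕜‖ ^ 2 : ℝ) : 𝕜) := by
    rw [rankOne_apply, inner_smul_left, RCLike.conj_mul, RCLike.ofReal_pow]
  rw [ContinuousLinearMap.reApplyInnerSelf_apply, sub_apply, smul_apply, inner_sub_left, hrank,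
    inner_smul_left, RCLike.conj_ofReal, map_sub, RCLike.re_ofReal_mul, RCLike.ofReal_re]
  exact sub_nonneg.2 h

theorem rankOne_smul_smul_self (c : 𝕜) (x : E) :
    rankOne 𝕜 (c • x) (c • x) = ((‖c‖ ^ 2 : ℝ) : 𝕜) • rankOne 𝕜 x x := by
  simp [smul_smul, RCLike.mul_conj]

theorem exists_rankOne_le_and_apply_eq (hT : T.IsPositive) (x : E) :
    ∃ η : E, rankOne 𝕜 η η ≤ T ∧ rankOne 𝕜 η η x = T x := by
  by_cases hx : T x = 0
  · exact ⟨0, by simpa [ContinuousLinearMap.le_def] using hT, by simp [hx]⟩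
  set d := RCLike.re ⟪T x, x⟫_𝕜 with hd
  have hd_pos : 0 < d := (hT.re_inner_nonneg_left x).lt_of_ne
    fun h => hx (apply_eq_zero_of_re_inner_apply_self_eq_zero hT h.symm)
  have hd_ne : (d : 𝕜) ≠ 0 := RCLike.ofReal_ne_zero.2 hd_pos.ne'
  have hη : rankOne 𝕜 (((√d)⁻¹ : 𝕜) • T x) (((√d)⁻¹ : 𝕜) • T x) =
      (d : 𝕜)⁻¹ • rankOne 𝕜 (T x) (T x) := by
    rw [rankOne_smul_smul_self, norm_inv, RCLike.norm_ofReal, inv_pow, sq_abs,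
      Real.sq_sqrt hd_pos.le, RCLike.ofReal_inv]
  refine ⟨((√d)⁻¹ : 𝕜) • T x, ?_, ?_⟩
  · have h := (rankOne_apply_self_le_smul hT x).smul_of_nonneg
      (inv_nonneg.2 (RCLike.ofReal_nonneg.2 hd_pos.le : (0 : 𝕜) ≤ d))
    rwa [smul_sub, ← hd, inv_smul_smul₀ hd_ne, ← hη] at h
  · have hinner : ⟪T x, x⟫_𝕜 = d := (hT.isSymmetric.coe_re_inner_apply_self x).symm
    rw [hη, smul_apply, rankOne_apply, hinner, inv_smul_smul₀ hd_ne]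

theorem exists_eq_smul_rankOne_of_le (hS : S.IsPositive) {η : E} (hSη : S ≤ rankOne 𝕜 η η) :
    ∃ c : 𝕜, S = c • rankOne 𝕜 η η := by
  -- For `η = 0` the quotients are `0 / 0 = 0`, and the formula remains true.
  have hSx (x : E) : S x = (⟪η, x⟫_𝕜 / ⟪η, η⟫_𝕜) • S η := by
    have horth : rankOne 𝕜 η η (x - (⟪η, x⟫_𝕜 / ⟪η, η⟫_𝕜) • η) = 0 := by
      rcases eq_or_ne η 0 with rfl | hη
      · simp
      · rw [rankOne_apply, inner_sub_right, inner_smul_right,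
          div_mul_cancel₀ _ (inner_self_ne_zero.2 hη), sub_self, zero_smul]
    simpa [sub_eq_zero] using apply_eq_zero_of_isPositive_of_le hS hSη horth
  refine ⟨⟪η, S η⟫_𝕜 / ⟪η, η⟫_𝕜 ^ 2, ContinuousLinearMap.ext fun x => ext_inner_left 𝕜 fun y => ?_⟩
  calc ⟪y, S x⟫_𝕜 = ⟪η, x⟫_𝕜 / ⟪η, η⟫_𝕜 * ⟪S y, η⟫_𝕜 := by
        rw [hSx x, inner_smul_right, hS.inner_left_eq_inner_right]
    _ = ⟪η, x⟫_𝕜 / ⟪η, η⟫_𝕜 * (⟪y, η⟫_𝕜 / ⟪η, η⟫_𝕜 * ⟪η, S η⟫_𝕜) := by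
        rw [hSx y, inner_smul_left, map_div₀, inner_conj_symm, inner_conj_symm,
          hS.inner_left_eq_inner_right]
    _ = ⟪y, ((⟪η, S η⟫_𝕜 / ⟪η, η⟫_𝕜 ^ 2) • rankOne 𝕜 η η) x⟫_𝕜 := by
        rw [smul_apply, inner_smul_right, inner_right_rankOne_apply]
        ring

/-- A positive operator is pure if it dominates no positive operators other than its multiples,
i.e. if it is zero or spans an extreme ray of the cone of positive operators. -/
def IsPureOperator (T : E →L[𝕜] E) : Prop :=
  T.IsPositive ∧ ∀ S : E →L[𝕜] E, S.IsPositive → S ≤ T → ∃ c : 𝕜, S = c • T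

theorem isPureOperator_iff_exists_eq_rankOne : IsPureOperator T ↔ ∃ η : E, T = rankOne 𝕜 η η := by
  constructor
  · rintro ⟨hT, hmul⟩
    by_cases h0 : T = 0
    · exact ⟨0, by simp [h0]⟩
    obtain ⟨x, hx⟩ : ∃ x, T x ≠ 0 := by
      contrapose! h0
      exact ContinuousLinearMap.ext h0
    obtain ⟨η, hηT, hηx⟩ := exists_rankOne_le_and_apply_eq hT x
    obtain ⟨c, hc⟩ := hmul _ (isPositive_rankOne_self η) hηT
    have hc1 : c = 1 := smul_left_injective 𝕜 hx <| by
      simpa only [hc, smul_apply, one_smul] using hηx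
    exact ⟨η, by rw [hc, hc1, one_smul]⟩
  · rintro ⟨η, rfl⟩
    exact ⟨isPositive_rankOne_self η, fun S hS hSη => exists_eq_smul_rankOne_of_le hS hSη⟩

end Positive

section Trace

variable {𝕜 E ι : Type*} [RCLike 𝕜] [NormedAddCommGroup E] [InnerProductSpace 𝕜 E]
  {b : HilbertBasis ι 𝕜 E} {S T : E →L[𝕜] E}

/-- The trace of `T` along the Hilbert basis `b` exists and equals `t`. As a `HasSum`, it never
refers to the junk value of a divergent sum. -/
def HasTrace (b : HilbertBasis ι 𝕜 E) (T : E →L[𝕜] E) (t : 𝕜) : Prop :=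
  HasSum (fun i => ⟪b i, T (b i)⟫_𝕜) t

namespace HasTrace

theorem sub {s t : 𝕜} (hS : HasTrace b S s) (hT : HasTrace b T t) :
    HasTrace b (S - T) (s - t) := by
  simpa only [HasTrace, sub_apply, inner_sub_right] using HasSum.sub hS hT

theorem smul {t : 𝕜} (hT : HasTrace b T t) (c : 𝕜) : HasTrace b (c • T) (c * t) := by
  simpa only [HasTrace, smul_apply, inner_smul_right] using HasSum.mul_left c hT

theorem nonneg {t : ℝ} (h : HasTrace b T (t : 𝕜)) (hT : T.IsPositive) : 0 ≤ t :=
  RCLike.ofReal_nonneg.1 (HasSum.nonneg (fun i => hT.inner_nonneg_right (b i)) h)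

theorem eq_zero (h : HasTrace b T 0) (hT : T.IsPositive) : T = 0 := by
  have hdiag := (hasSum_zero_iff_of_nonneg fun i => hT.inner_nonneg_right (b i)).1 h
  refine ContinuousLinearMap.ext_on (s := Set.range b)
    (Submodule.dense_iff_topologicalClosure_eq_top.2 b.dense_span) ?_
  rintro _ ⟨i, rfl⟩
  apply apply_eq_zero_of_re_inner_apply_self_eq_zero hT
  rw [hT.inner_left_eq_inner_right, congrFun hdiag i, Pi.zero_apply, map_zero]

theorem exists_of_le {t : 𝕜} (hT : HasTrace b T t) (hS : S.IsPositive) (hST : S ≤ T) :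
    ∃ s : ℝ, HasTrace b S (s : 𝕜) := by
  have hle (i : ι) : RCLike.re ⟪b i, S (b i)⟫_𝕜 ≤ RCLike.re ⟪b i, T (b i)⟫_𝕜 := by
    simpa [inner_sub_right] using hST.re_inner_nonneg_right (b i)
  obtain ⟨s, hs⟩ := Summable.of_nonneg_of_le (fun i => hS.re_inner_nonneg_right (b i)) hle
    (RCLike.hasSum_re 𝕜 hT).summable
  exact ⟨s, ((RCLike.hasSum_ofReal 𝕜).2 hs).congr_fun fun i =>
    (hS.isSymmetric.coe_re_inner_self_apply (b i)).symm⟩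

end HasTrace

theorem hasTrace_rankOne (b : HilbertBasis ι 𝕜 E) (x y : E) :
    HasTrace b (rankOne 𝕜 x y) ⟪y, x⟫_𝕜 := by
  simpa only [HasTrace, rankOne_apply, inner_smul_right] using b.hasSum_inner_mul_inner y x

theorem IsPureOperator.eq_of_smul_le (hT : IsPureOperator T) (hS : S.IsPositive) {a : ℝ}
    (ha : 0 < a) (haS : (a : 𝕜) • S ≤ T) (hTtr : HasTrace b T 1) (hStr : HasTrace b S 1) :
    S = T := by
  obtain ⟨c, hc⟩ := hT.2 _ (hS.smul_of_nonneg (RCLike.ofReal_nonneg.2 ha.le)) haS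
  have hac : (a : 𝕜) = c := by
    have hctr : HasTrace b ((a : 𝕜) • S) (c * 1) := hc ▸ hTtr.smul c
    simpa only [mul_one] using (hStr.smul (a : 𝕜)).unique hctr
  rw [← hac] at hc
  exact smul_right_injective _ (RCLike.ofReal_ne_zero.2 ha.ne') hc

end Trace

section State

variable {H ι : Type*} [NormedAddCommGroup H] [InnerProductSpace ℂ H] [CompleteSpace H]
  {b : HilbertBasis ι ℂ H} {S T : H →L[ℂ] H}

theorem isStateOperator_iff_hasTrace_one :
    IsStateOperator b T ↔ T.IsPositive ∧ HasTrace b T 1 :=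
  and_congr_right fun _ =>
    ⟨fun ⟨hsum, htr⟩ => htr ▸ hsum.hasSum, fun h => ⟨h.summable, h.tsum_eq⟩⟩

theorem HasTrace.isStateOperator_inv_smul {s : ℝ} (h : HasTrace b S (s : ℂ))
    (hS : S.IsPositive) (hs : s ≠ 0) : IsStateOperator b (s⁻¹ • S) := by
  have hs_inv : (0 : ℂ) ≤ (s⁻¹ : ℝ) := RCLike.ofReal_nonneg.2 (inv_nonneg.2 (h.nonneg hS))
  rw [← Complex.coe_smul, isStateOperator_iff_hasTrace_one]
  refine ⟨hS.smul_of_nonneg hs_inv, ?_⟩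
  simpa [hs] using h.smul ((s⁻¹ : ℝ) : ℂ)

theorem isPureOperator_of_mem_extremePoints
    (hT : T ∈ Set.extremePoints ℝ {S : H →L[ℂ] H | IsStateOperator b S}) : IsPureOperator T := by
  obtain ⟨hTstate, hext⟩ := mem_extremePoints_iff_left.1 hT
  obtain ⟨hTpos, hTtr⟩ := isStateOperator_iff_hasTrace_one.1 hTstate
  refine ⟨hTpos, fun S hS hST => ?_⟩
  obtain ⟨s, hs⟩ := hTtr.exists_of_le hS hST
  have hsub : HasTrace b (T - S) ((1 - s : ℝ) : ℂ) := by simpa using hTtr.sub hs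
  have hs0 : 0 ≤ s := hs.nonneg hS
  have hs1 : 0 ≤ 1 - s := hsub.nonneg hST
  rcases hs0.eq_or_lt with rfl | hs0
  · exact ⟨0, by rw [zero_smul, HasTrace.eq_zero (by simpa using hs) hS]⟩
  rcases hs1.eq_or_lt with hs1 | hs1
  · refine ⟨1, ?_⟩
    rw [one_smul, sub_eq_zero.1 (HasTrace.eq_zero (by simpa [← hs1] using hsub) hST)]
  have hmem : T ∈ openSegment ℝ (s⁻¹ • S) ((1 - s)⁻¹ • (T - S)) :=
    ⟨s, 1 - s, hs0, hs1, add_sub_cancel _ _, by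
      rw [smul_inv_smul₀ hs0.ne', smul_inv_smul₀ hs1.ne', add_sub_cancel]⟩
  have hST_eq : s⁻¹ • S = T := hext _ (hs.isStateOperator_inv_smul hS hs0.ne') _
    (hsub.isStateOperator_inv_smul hST hs1.ne') hmem
  exact ⟨s, by rw [Complex.coe_smul, ← hST_eq, smul_inv_smul₀ hs0.ne']⟩

theorem IsPureOperator.mem_extremePoints (hT : IsPureOperator T) (hTtr : HasTrace b T 1) :
    T ∈ Set.extremePoints ℝ {S : H →L[ℂ] H | IsStateOperator b S} := by
  refine mem_extremePoints_iff_left.2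
    ⟨isStateOperator_iff_hasTrace_one.2 ⟨hT.1, hTtr⟩, fun T₁ h₁ T₂ h₂ hmem => ?_⟩
  obtain ⟨a, c, ha, hc, -, hsum⟩ := hmem
  obtain ⟨hT₁, hT₁tr⟩ := isStateOperator_iff_hasTrace_one.1 h₁
  refine hT.eq_of_smul_le hT₁ ha ?_ hTtr hT₁tr
  rw [ContinuousLinearMap.le_def, ← hsum, RCLike.ofReal_eq_complex_ofReal, Complex.coe_smul,
    add_sub_cancel_left, ← Complex.coe_smul]
  exact h₂.1.smul_of_nonneg (RCLike.ofReal_nonneg.2 hc.le)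

namespace IsStateOperator

theorem mem_extremePoints_iff (hT : IsStateOperator b T) :
    T ∈ Set.extremePoints ℝ {S : H →L[ℂ] H | IsStateOperator b S} ↔
      ∀ (w : ℝ) (T₁ T₂ : H →L[ℂ] H), IsStateOperator b T₁ → IsStateOperator b T₂ →
        0 < w → w < 1 → T = (w : ℂ) • T₁ + (1 - (w : ℂ)) • T₂ → T = T₁ ∧ T = T₂ := by
  have hcoe (w : ℝ) (T₁ T₂ : H →L[ℂ] H) :
      (w : ℂ) • T₁ + (1 - (w : ℂ)) • T₂ = w • T₁ + (1 - w) • T₂ := by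
    rw [← Complex.ofReal_one, ← Complex.ofReal_sub, Complex.coe_smul, Complex.coe_smul]
  simp only [hcoe]
  rw [mem_extremePoints]
  constructor
  · rintro ⟨-, hext⟩ w T₁ T₂ h₁ h₂ hw0 hw1 hw
    obtain ⟨rfl, hT₂⟩ := hext T₁ h₁ T₂ h₂
      ⟨w, 1 - w, hw0, sub_pos.2 hw1, add_sub_cancel _ _, hw.symm⟩
    exact ⟨rfl, hT₂.symm⟩
  · refine fun hext => ⟨hT, fun T₁ h₁ T₂ h₂ ⟨a, c, ha, hc, hac, hsum⟩ => ?_⟩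
    obtain rfl : c = 1 - a := eq_sub_of_add_eq' hac
    obtain ⟨hT₁, hT₂⟩ := hext a T₁ T₂ h₁ h₂ ha (sub_pos.1 hc) hsum.symm
    exact ⟨hT₁.symm, hT₂.symm⟩

theorem mem_extremePoints_iff_isPureOperator (hT : IsStateOperator b T) :
    T ∈ Set.extremePoints ℝ {S : H →L[ℂ] H | IsStateOperator b S} ↔ IsPureOperator T :=
  ⟨isPureOperator_of_mem_extremePoints,
    fun h => h.mem_extremePoints (isStateOperator_iff_hasTrace_one.1 hT).2⟩

theorem isPureOperator_iff_exists_norm_eq_one (hT : IsStateOperator b T) :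
    IsPureOperator T ↔ ∃ ψ : H, ‖ψ‖ = 1 ∧ T = rankOne ℂ ψ ψ := by
  rw [isPureOperator_iff_exists_eq_rankOne]
  refine exists_congr fun ψ => (and_iff_right_of_imp ?_).symm
  rintro rfl
  have hψ : ⟪ψ, ψ⟫ = 1 :=
    (hasTrace_rankOne b ψ ψ).unique (isStateOperator_iff_hasTrace_one.1 hT).2
  have hnorm : ‖ψ‖ ^ 2 = 1 := by rw [← inner_self_eq_norm_sq (𝕜 := ℂ), hψ, RCLike.one_re]
  exact (pow_eq_one_iff_of_nonneg (norm_nonneg ψ) two_ne_zero).1 hnorm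

end IsStateOperator

theorem isExtremal_state_iff_rankOne_projection_general (b : HilbertBasis ι ℂ H)
    (T : H →L[ℂ] H) (hT : IsStateOperator b T) :
    (∀ (w : ℝ) (T₁ T₂ : H →L[ℂ] H), IsStateOperator b T₁ → IsStateOperator b T₂ →
        0 < w → w < 1 → T = (w : ℂ) • T₁ + (1 - (w : ℂ)) • T₂ → T = T₁ ∧ T = T₂) ↔
      ∃ ψ : H, ‖ψ‖ = 1 ∧ T = (innerSL ℂ ψ).smulRight ψ := by
  rw [← hT.mem_extremePoints_iff, hT.mem_extremePoints_iff_isPureOperator,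
    hT.isPureOperator_iff_exists_norm_eq_one]
  simp only [rankOne_def]

end State

/-- A state operator is an extreme point of the convex set of state operators
iff it is a rank-one orthogonal projection `|ψ⟩⟨ψ|` onto the span of a unit vector `ψ`. -/
theorem isExtremal_state_iff_rankOne_projection
    {H : Type*} [NormedAddCommGroup H] [InnerProductSpace ℂ H] [CompleteSpace H]
    {ι : Type*} [Countable ι] (b : HilbertBasis ι ℂ H)
    (T : H →L[ℂ] H) (hT : IsStateOperator b T) :
    (∀ (w : ℝ) (T₁ T₂ : H →L[ℂ] H), IsStateOperator b T₁ → IsStateOperator b T₂ →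
        0 < w → w < 1 → T = (w : ℂ) • T₁ + (1 - (w : ℂ)) • T₂ → T = T₁ ∧ T = T₂) ↔
      ∃ ψ : H, ‖ψ‖ = 1 ∧ T = (innerSL ℂ ψ).smulRight ψ :=
  isExtremal_state_iff_rankOne_projection_general b T hT
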